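/- Let m ∈ ℕ and let S_m = {(a,b) ∈ ℕ × ℕ : 1 ≤ a + b ≤ m}. Let r_i = (x_i, y_i) ∈ ℝ², let (r_j)_{j∈N} be a finite family of nodes with, for each j, a basis-function vector W_j : S_m → ℝ, and let (r_q, α_q)_{q∈M} be a finite family of nodes with real coefficients α_q. Write x_{ji} = x_j − x_i, etc. Define the moments matrix M by M_{(a,b),(c,d)} = ∑_{j∈N} x_{ji}^a y_{ji}^b · W_j(c,d), and the right-hand-side vector C̃ by C̃(a,b) = ∑_{q∈M} α_q · a · x_{qi}^{a−1} y_{qi}^b (the term being 0 when a = 0). Suppose Ψ : S_m → ℝ satisfies the local linear system M · Ψ = C̃ (as vectors indexed by S_m). Then the weights w_j := ∑_{(c,d)∈S_m} W_j(c,d) · Ψ(c,d) yield order-m compact consistency for ∂/∂x: for every real polynomial P in two variables with total degree at most m, ∑_{j∈N} w_j (P(r_j) − P(r_i)) = ∑_{q∈M} α_q (∂P/∂x)(r_q). -/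

import Mathlib

open MvPolynomial

/-!
Both sides of the consistency identity are linear in the polynomial and vanish on constants.
Polynomials of total degree at most `m` are spanned by the monomials of degree at most `m` in the
coordinates centred at `r_i`, because translation preserves the bound on the total degree. On a
nonconstant centred monomial the value at `r_i` is zero, so the identity there is exactly the
corresponding row of `M Ψ = C̃`.
-/

section TotalDegree

variable {σ τ R : Type*} [CommSemiring R]

lemma totalDegree_aeval_le {f : σ → MvPolynomial τ R} {d : ℕ} (hf : ∀ i, (f i).totalDegree ≤ d)
    (P : MvPolynomial σ R) : (aeval f P).totalDegree ≤ d * P.totalDegree := by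
  rw [aeval_def, eval₂_eq]
  refine totalDegree_finsetSum_le fun s hs => ?_
  calc (C (coeff s P) * ∏ i ∈ s.support, f i ^ s i).totalDegree
      ≤ (∏ i ∈ s.support, f i ^ s i).totalDegree := by
        simpa using totalDegree_mul (C (coeff s P)) (∏ i ∈ s.support, f i ^ s i)
    _ ≤ ∑ i ∈ s.support, (f i ^ s i).totalDegree := totalDegree_finsetProd _ _
    _ ≤ ∑ i ∈ s.support, s i * d := Finset.sum_le_sum fun i _ =>
        (totalDegree_pow _ _).trans (Nat.mul_le_mul_left _ (hf i))
    _ = d * s.degree := by rw [← Finset.sum_mul, mul_comm, Finsupp.degree_apply]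
    _ ≤ d * P.totalDegree := Nat.mul_le_mul_left _ (le_totalDegree hs)

end TotalDegree

section CenteredMonomial

variable {σ R : Type*} [CommRing R]

/-- The substitution `P(X) ↦ P(X - c)`, which re-expresses a polynomial about the origin as a
polynomial about the node `c`. -/
noncomputable def recenter (c : σ → R) : MvPolynomial σ R →ₐ[R] MvPolynomial σ R :=
  aeval fun i => X i - C (c i)

lemma recenter_X (c : σ → R) (i : σ) : recenter c (X i) = X i - C (c i) :=
  aeval_X _ i

lemma recenter_recenter_neg (c : σ → R) (P : MvPolynomial σ R) :
    recenter c (recenter (-c) P) = P := by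
  have hcomp : (recenter c).comp (recenter (-c)) = AlgHom.id R _ := by
    ext1 i
    simp [recenter_X, algHom_C, algebraMap_eq]
  exact DFunLike.congr_fun hcomp P

lemma eval_recenter (c x : σ → R) (P : MvPolynomial σ R) :
    eval x (recenter c P) = eval (x - c) P := by
  have hcomp : (aeval x).comp (recenter c) = aeval (x - c) := by
    ext1 i
    simp [recenter]
  simpa [aeval_eq_eval] using DFunLike.congr_fun hcomp P

lemma totalDegree_recenter_le (c : σ → R) (P : MvPolynomial σ R) :
    (recenter c P).totalDegree ≤ P.totalDegree := by
  have hX (i : σ) : (X i - C (c i)).totalDegree ≤ 1 :=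
    (totalDegree_sub_C_le _ _).trans <| by
      simpa [X] using totalDegree_monomial_le (Finsupp.single i 1) (1 : R)
  simpa [recenter] using totalDegree_aeval_le hX P

lemma pderiv_recenter (c : σ → R) (k : σ) (P : MvPolynomial σ R) :
    pderiv k (recenter c P) = recenter c (pderiv k P) := by
  classical
  induction P using MvPolynomial.induction_on with
  | C a => simp [recenter, algebraMap_eq]
  | add P Q hP hQ => simp only [map_add, hP, hQ]
  | mul_X P i hP =>
    have hX : pderiv k (recenter c (X i)) = recenter c (pderiv k (X i)) := by
      by_cases h : i = k <;> simp [recenter_X, pderiv_X, h]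
    simp only [map_mul, pderiv_mul, map_add, hP, hX]

/-- The monomial `∏ i, (X i - c i) ^ s i` in the coordinates centred at the node `c`. -/
noncomputable def centeredMonomial (c : σ → R) (s : σ →₀ ℕ) : MvPolynomial σ R :=
  recenter c (monomial s 1)

lemma centeredMonomial_zero (c : σ → R) : centeredMonomial c 0 = 1 :=
  map_one (recenter c)

lemma eval_centeredMonomial (c x : σ → R) (s : σ →₀ ℕ) :
    eval x (centeredMonomial c s) = s.prod fun i n => (x i - c i) ^ n := by
  simp [centeredMonomial, eval_recenter, eval_monomial]

lemma eval_centeredMonomial_self (c : σ → R) {s : σ →₀ ℕ} (hs : s ≠ 0) :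
    eval c (centeredMonomial c s) = 0 := by
  obtain ⟨i, hi⟩ := Finsupp.support_nonempty_iff.mpr hs
  rw [eval_centeredMonomial]
  exact Finset.prod_eq_zero hi (by simp [Finsupp.mem_support_iff.mp hi])

lemma pderiv_centeredMonomial (c : σ → R) (k : σ) (s : σ →₀ ℕ) :
    pderiv k (centeredMonomial c s) = (s k : R) • centeredMonomial c (s - Finsupp.single k 1) := by
  rw [centeredMonomial, centeredMonomial, pderiv_recenter, pderiv_monomial, ← map_smul,
    smul_monomial, one_mul, smul_eq_mul, mul_one]

lemma mem_span_centeredMonomial (c : σ → R) {m : ℕ} {P : MvPolynomial σ R}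
    (hP : P.totalDegree ≤ m) :
    P ∈ Submodule.span R (centeredMonomial c '' {s | s.degree ≤ m}) := by
  have hQ : recenter (-c) P ∈ restrictTotalDegree σ R m :=
    (mem_restrictTotalDegree _ _ _).mpr ((totalDegree_recenter_le _ _).trans hP)
  rw [restrictTotalDegree, restrictSupport_eq_span] at hQ
  have hmap := Submodule.mem_map_of_mem (f := (recenter c).toLinearMap) hQ
  rwa [Submodule.map_span, Set.image_image, AlgHom.toLinearMap_apply,
    recenter_recenter_neg] at hmap

end CenteredMonomial

section Moments

variable {R ιN κ : Type*} [CommSemiring R]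

lemma sum_weight_mul_eq_sum_moment_mul (N : Finset ιN) (B : Finset κ) (μ w : ιN → R)
    (W : ιN → κ → R) (Ψ : κ → R) (hw : ∀ j ∈ N, w j = ∑ b ∈ B, W j b * Ψ b) :
    ∑ j ∈ N, w j * μ j = ∑ b ∈ B, (∑ j ∈ N, μ j * W j b) * Ψ b := by
  simp only [Finset.sum_mul]
  rw [Finset.sum_comm]
  refine Finset.sum_congr rfl fun j hj => ?_
  rw [hw j hj, Finset.sum_mul]
  exact Finset.sum_congr rfl fun b _ => by ring

end Moments

section Consistency

variable {σ R ιN ιM κ : Type*} [CommRing R]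

lemma sum_mul_eval_sub_eq_of_centeredMonomial {m : ℕ} (c : σ → R) (N : Finset ιN)
    (r : ιN → σ → R) (w : ιN → R) (Λ : MvPolynomial σ R →ₗ[R] R) (hΛ : Λ 1 = 0)
    (hmoment : ∀ s : σ →₀ ℕ, 1 ≤ s.degree → s.degree ≤ m →
      ∑ j ∈ N, w j * eval (r j) (centeredMonomial c s) = Λ (centeredMonomial c s))
    {P : MvPolynomial σ R} (hP : P.totalDegree ≤ m) :
    ∑ j ∈ N, w j * (eval (r j) P - eval c P) = Λ P := by
  let D : MvPolynomial σ R →ₗ[R] R :=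
    ∑ j ∈ N, w j • ((aeval (r j)).toLinearMap - (aeval c).toLinearMap)
  have hD (Q : MvPolynomial σ R) : D Q = ∑ j ∈ N, w j * (eval (r j) Q - eval c Q) := by
    simp [D, aeval_eq_eval]
  have heqOn : Set.EqOn D Λ (centeredMonomial c '' {s | s.degree ≤ m}) := by
    rintro _ ⟨s, hsm, rfl⟩
    obtain rfl | hs := eq_or_ne s 0
    · simp [hD, centeredMonomial_zero, hΛ]
    · have hdeg : 1 ≤ s.degree :=
        Nat.one_le_iff_ne_zero.mpr (mt (Finsupp.degree_eq_zero_iff s).mp hs)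
      simpa [hD, eval_centeredMonomial_self c hs] using hmoment s hdeg hsm
  exact (hD P).symm.trans (LinearMap.eqOn_span heqOn (mem_span_centeredMonomial c hP))

theorem labfm_linear_system_gives_consistency_dx_general {m : ℕ}
    (L : MvPolynomial σ R →ₗ[R] MvPolynomial σ R) (hL : L 1 = 0) (c : σ → R)
    (N : Finset ιN) (r : ιN → σ → R) (M : Finset ιM) (ρ : ιM → σ → R) (α : ιM → R)
    (B : Finset κ) (W : ιN → κ → R) (Ψ : κ → R)
    (hsys : ∀ s : σ →₀ ℕ, 1 ≤ s.degree → s.degree ≤ m →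
      ∑ b ∈ B, (∑ j ∈ N, eval (r j) (centeredMonomial c s) * W j b) * Ψ b =
        ∑ q ∈ M, α q * eval (ρ q) (L (centeredMonomial c s)))
    (w : ιN → R) (hw : ∀ j ∈ N, w j = ∑ b ∈ B, W j b * Ψ b)
    {P : MvPolynomial σ R} (hP : P.totalDegree ≤ m) :
    ∑ j ∈ N, w j * (eval (r j) P - eval c P) = ∑ q ∈ M, α q * eval (ρ q) (L P) := by
  let Λ : MvPolynomial σ R →ₗ[R] R := ∑ q ∈ M, α q • (aeval (ρ q)).toLinearMap ∘ₗ L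
  have hΛ (Q : MvPolynomial σ R) : Λ Q = ∑ q ∈ M, α q * eval (ρ q) (L Q) := by
    simp [Λ, aeval_eq_eval]
  have hΛ_one : Λ 1 = 0 := by simp [hΛ, hL]
  rw [← hΛ]
  refine sum_mul_eval_sub_eq_of_centeredMonomial c N r w Λ hΛ_one (fun s hs hsm => ?_) hP
  rw [sum_weight_mul_eq_sum_moment_mul N B _ w W Ψ hw, hsys s hs hsm, hΛ]

end Consistency

section Plane

variable {R : Type*} [CommRing R]

lemma eval_centeredMonomial_fin_two (c x : Fin 2 → R) (s : Fin 2 →₀ ℕ) :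
    eval x (centeredMonomial c s) = (x 0 - c 0) ^ s 0 * (x 1 - c 1) ^ s 1 := by
  rw [eval_centeredMonomial, Finsupp.prod_fintype _ _ fun _ => pow_zero _, Fin.prod_univ_two]

lemma eval_pderiv_zero_centeredMonomial_fin_two (c x : Fin 2 → R) (s : Fin 2 →₀ ℕ) :
    eval x (pderiv 0 (centeredMonomial c s)) =
      s 0 * (x 0 - c 0) ^ (s 0 - 1) * (x 1 - c 1) ^ s 1 := by
  simp [pderiv_centeredMonomial, eval_centeredMonomial_fin_two, mul_assoc]

lemma mem_exponents_of_degree {m : ℕ} {s : Fin 2 →₀ ℕ} (hs : 1 ≤ s.degree) (hsm : s.degree ≤ m) :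
    (s 0, s 1) ∈ (Finset.range (m + 1) ×ˢ Finset.range (m + 1)).filter
      (fun p => 1 ≤ p.1 + p.2 ∧ p.1 + p.2 ≤ m) := by
  rw [Finsupp.degree_eq_sum, Fin.sum_univ_two] at hs hsm
  simp only [Finset.mem_filter, Finset.mem_product, Finset.mem_range]
  omega

end Plane

/-- If `Ψ` solves the local linear system `M Ψ = C̃` built from the moments of
the stencil, then the weights `w_j = ∑ W_j(c,d) Ψ(c,d)` give order-`m` compact
consistency for `∂/∂x`. -/
theorem labfm_linear_system_gives_consistency_dx {ιN ιM : Type*} (m : ℕ) (xi yi : ℝ)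
    (N : Finset ιN) (xj yj : ιN → ℝ)
    (M : Finset ιM) (xq yq α : ιM → ℝ)
    (S : Finset (ℕ × ℕ))
    (hS : S = (Finset.range (m + 1) ×ˢ Finset.range (m + 1)).filter
      (fun p => 1 ≤ p.1 + p.2 ∧ p.1 + p.2 ≤ m))
    (W : ιN → ℕ × ℕ → ℝ) (Ψ : ℕ × ℕ → ℝ)
    (hsys : ∀ p ∈ S,
      ∑ cd ∈ S, (∑ j ∈ N, (xj j - xi) ^ p.1 * (yj j - yi) ^ p.2 * W j cd) * Ψ cd =
        ∑ q ∈ M, α q * ((p.1 : ℝ) * (xq q - xi) ^ (p.1 - 1) * (yq q - yi) ^ p.2))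
    (w : ιN → ℝ) (hw : ∀ j, w j = ∑ cd ∈ S, W j cd * Ψ cd) :
    ∀ P : MvPolynomial (Fin 2) ℝ, P.totalDegree ≤ m →
      ∑ j ∈ N, w j * (eval ![xj j, yj j] P - eval ![xi, yi] P) =
        ∑ q ∈ M, α q * eval ![xq q, yq q] (pderiv 0 P) := by
  intro P hP
  refine labfm_linear_system_gives_consistency_dx_general (pderiv 0).toLinearMap pderiv_one
    ![xi, yi] N (fun j => ![xj j, yj j]) M (fun q => ![xq q, yq q]) α S W Ψ
    (fun s hs hsm => ?_) w (fun j _ => hw j) hP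
  simpa [eval_centeredMonomial_fin_two, eval_pderiv_zero_centeredMonomial_fin_two] using
    hsys (s 0, s 1) (hS ▸ mem_exponents_of_degree hs hsm)
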